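/- Let R be a nonnil-coherent φ-ring, M an R-module, T a finitely presented φ-torsion R-module, and E an injective R-module. Then there is an isomorphism of abelian groups Tor_1^R(T, Hom_R(M,E)) ≅ Hom_R(Ext_R^1(T,M), E). -/

import Mathlib

open CategoryTheory

universe u

/-- A commutative ring is a `φ`-ring if its nilradical is a divided prime ideal. -/
def IsPhiRing (R : Type u) [CommRing R] : Prop :=
  (nilradical R).IsPrime ∧ ∀ x : R, x ∉ nilradical R → nilradical R ≤ Ideal.span {x}

/-- A ring is nonnil-coherent if every finitely generated nonnil ideal is
finitely presented as a module. -/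
def IsNonnilCoherent (R : Type u) [CommRing R] : Prop :=
  ∀ I : Ideal R, I.FG → ¬ I ≤ nilradical R → Module.FinitePresentation R I

/-- A module is φ-torsion if every element is annihilated by a nonnil ideal. -/
def IsPhiTorsion (R : Type u) [CommRing R] (T : Type u) [AddCommGroup T] [Module R T] : Prop :=
  ∀ t : T, ∃ I : Ideal R, ¬ I ≤ nilradical R ∧ ∀ a ∈ I, a • t = 0

/-- A module `M` is φ-flat if `Tor₁ᴿ(T, M) = 0` for every φ-torsion module `T`. -/
def IsPhiFlat (R : Type u) [CommRing R] (M : Type u) [AddCommGroup M] [Module R M] : Prop :=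
  ∀ (T : Type u) [AddCommGroup T] [Module R T], IsPhiTorsion R T →
    Subsingleton (((Tor (ModuleCat.{u} R) 1).obj (ModuleCat.of R T)).obj (ModuleCat.of R M))

/-- A module `M` is nonnil-injective if `Ext¹ᴿ(T, M) = 0` for every φ-torsion module `T`. -/
def IsNonnilInjective (R : Type u) [CommRing R] (M : Type u) [AddCommGroup M] [Module R M] :
    Prop :=
  ∀ (T : Type u) [AddCommGroup T] [Module R T], IsPhiTorsion R T →
    Subsingleton (((Ext R (ModuleCat.{u} R) 1).obj (Opposite.op (ModuleCat.of R T))).obj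
      (ModuleCat.of R M))

/-- A module `M` is nonnil-FP-injective if `Ext¹ᴿ(T, M) = 0` for every finitely
presented φ-torsion module `T`. -/
def IsNonnilFPInjective (R : Type u) [CommRing R] (M : Type u) [AddCommGroup M] [Module R M] :
    Prop :=
  ∀ (T : Type u) [AddCommGroup T] [Module R T], Module.FinitePresentation R T →
    IsPhiTorsion R T →
    Subsingleton (((Ext R (ModuleCat.{u} R) 1).obj (Opposite.op (ModuleCat.of R T))).obj
      (ModuleCat.of R M))

/-!
Let `0 → K → F → T → 0` be exact with `F` finite free. Then `Tor₁(T, Hom(M, E))` is the kernel of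
`K ⊗ Hom(M, E) → F ⊗ Hom(M, E)`, while `Ext¹(T, M)` is the cokernel of `Hom(F, M) → Hom(K, M)`, so
that `Hom(Ext¹(T, M), E)` is the kernel of `Hom(Hom(K, M), E) → Hom(Hom(F, M), E)`. Evaluation
`K ⊗ Hom(M, E) → Hom(Hom(K, M), E)` identifies the two kernels: by right exactness, and since `E` is
injective, it is bijective as soon as `K` is finitely presented. The finite presentation of `K`
comes from nonnil-coherence, which passes from `R` to `Rⁿ` for submodules with φ-torsion quotient.
-/

section NonnilCoherence

variable {R : Type u} [CommRing R]
variable {A P B : Type u} [AddCommGroup A] [Module R A] [AddCommGroup P] [Module R P]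
  [AddCommGroup B] [Module R B]

lemma IsPhiTorsion.of_injective (hB : IsPhiTorsion R B) (f : A →ₗ[R] B)
    (hf : Function.Injective f) : IsPhiTorsion R A := fun a ↦ by
  obtain ⟨I, hI, hIa⟩ := hB (f a)
  exact ⟨I, hI, fun r hr ↦ hf (by rw [map_smul, hIa r hr, map_zero])⟩

lemma IsPhiTorsion.of_surjective (hA : IsPhiTorsion R A) (f : A →ₗ[R] B)
    (hf : Function.Surjective f) : IsPhiTorsion R B := fun b ↦ by
  obtain ⟨a, rfl⟩ := hf b
  obtain ⟨I, hI, hIa⟩ := hA a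
  exact ⟨I, hI, fun r hr ↦ by rw [← map_smul, hIa r hr, map_zero]⟩

variable (R P) in
/-- The module analogue of nonnil-coherence: every finitely generated submodule with φ-torsion
quotient is finitely presented. Unlike for coherent modules, `P` itself need not be finitely
generated. -/
def IsNonnilCoherentModule : Prop :=
  ∀ K : Submodule R P, K.FG → IsPhiTorsion R (P ⧸ K) → Module.FinitePresentation R K

lemma IsNonnilCoherentModule.of_exact {g : A →ₗ[R] P} {f : P →ₗ[R] B}
    (hg : Function.Injective g) (hgf : Function.Exact g f) (hf : Function.Surjective f)
    (hA : IsNonnilCoherentModule R A) (hB : IsNonnilCoherentModule R B) :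
    IsNonnilCoherentModule R P := fun K hK hPK ↦ by
  have : Module.Finite R K := Module.Finite.iff_fg.mpr hK
  have image_fp : Module.FinitePresentation R (K.map f) :=
    hB _ (hK.map f) <| hPK.of_surjective (K.mapQ _ f (Submodule.le_comap_map f K)) <|
      .of_comp (g := K.mkQ) <| (Submodule.mkQ_surjective _).comp hf
  have surj : Function.Surjective (f.submoduleMap K) := f.submoduleMap_surjective K
  have ker_eq : LinearMap.ker (f.submoduleMap K) = LinearMap.range (g.submoduleComap K) := by
    ext ⟨x, hx⟩
    constructor
    · intro h
      obtain ⟨a, rfl⟩ := (hgf x).mp (congrArg Subtype.val h)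
      exact ⟨⟨a, hx⟩, rfl⟩
    · rintro ⟨a, ha⟩
      obtain rfl : g a = x := congrArg Subtype.val ha
      exact Subtype.ext (hgf.apply_apply_eq_zero a)
  let e : K.comap g ≃ₗ[R] LinearMap.ker (f.submoduleMap K) :=
    .ofInjective (g.submoduleComap K) (fun _ _ h ↦ Subtype.ext (hg (congrArg Subtype.val h)))
      ≪≫ₗ .ofEq _ _ ker_eq.symm
  have : Module.Finite R (LinearMap.ker (f.submoduleMap K)) :=
    Module.Finite.iff_fg.mpr (Module.FinitePresentation.fg_ker _ surj)
  have : Module.Finite R (K.comap g) := .equiv e.symm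
  have comap_fp : Module.FinitePresentation R (K.comap g) :=
    hA _ (Module.Finite.iff_fg.mp this) <| hPK.of_injective (Submodule.mapQ _ K g le_rfl) <|
      LinearMap.ker_eq_bot.mp <| Submodule.ker_liftQ_eq_bot _ _ _ <| by
        rw [LinearMap.ker_comp, Submodule.ker_mkQ]
  have : Module.FinitePresentation R (LinearMap.ker (f.submoduleMap K)) := .of_equiv e
  exact Module.finitePresentation_of_ker _ surj

lemma IsNonnilCoherent.module_self (hR : IsNonnilCoherent R) : IsNonnilCoherentModule R R :=
  fun I hI htor ↦ hR I hI fun hIle ↦ by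
    obtain ⟨J, hJ, hJ1⟩ := htor (Submodule.Quotient.mk 1)
    refine hJ (le_trans (fun a ha ↦ ?_) hIle)
    simpa using (Submodule.Quotient.mk_eq_zero I).mp (hJ1 a ha)

lemma IsNonnilCoherent.module_fin_pi (hR : IsNonnilCoherent R) :
    ∀ n : ℕ, IsNonnilCoherentModule R (Fin n → R)
  | 0 => fun _ _ _ ↦ inferInstance
  | n + 1 =>
    let e : (R × (Fin n → R)) ≃ₗ[R] (Fin (n + 1) → R) := Fin.consLinearEquiv R fun _ ↦ R
    .of_exact (g := e.toLinearMap ∘ₗ .inr R R _) (f := .fst R R _ ∘ₗ e.symm.toLinearMap)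
      (e.injective.comp LinearMap.inr_injective)
      ((LinearEquiv.conj_exact_iff_exact _ _ e).mpr .inr_fst)
      (Prod.fst_surjective.comp e.symm.surjective) (hR.module_fin_pi n) hR.module_self

lemma IsNonnilCoherent.exists_finitePresentation_kernel (hR : IsNonnilCoherent R) {T : Type u}
    [AddCommGroup T] [Module R T] [Module.FinitePresentation R T] (hT : IsPhiTorsion R T) :
    ∃ (n : ℕ) (K : Submodule R (Fin n → R)) (p : (Fin n → R) →ₗ[R] T),
      Module.FinitePresentation R K ∧ Function.Exact K.subtype p ∧ Function.Surjective p := by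
  obtain ⟨n, K, e, hK⟩ := Module.FinitePresentation.exists_fin R T
  refine ⟨n, K, e.symm.toLinearMap ∘ₗ K.mkQ, ?_, fun x ↦ by simp,
    e.symm.surjective.comp K.mkQ_surjective⟩
  exact hR.module_fin_pi n K hK (hT.of_injective e.symm.toLinearMap e.symm.injective)

end NonnilCoherence

section TensorHomEval

open TensorProduct

variable {R : Type*} [CommRing R]

lemma exact_lcomp_of_injective {A B C : Type*} {E : Type u} [Small.{u} R]
    [AddCommGroup A] [Module R A] [AddCommGroup B] [Module R B] [AddCommGroup C] [Module R C]
    [AddCommGroup E] [Module R E] [Module.Injective R E] {f : A →ₗ[R] B} {g : B →ₗ[R] C}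
    (hfg : Function.Exact f g) :
    Function.Exact (LinearMap.lcomp R E g) (LinearMap.lcomp R E f) := fun φ ↦ by
  have hrange : Function.Exact f g.rangeRestrict := fun b ↦ by
    rw [← hfg b, ← Subtype.coe_inj]; rfl
  rw [LinearMap.exact_lcomp_of_exact_of_surjective E hrange g.surjective_rangeRestrict φ]
  constructor
  · rintro ⟨ψ, rfl⟩
    obtain ⟨χ, rfl⟩ := Module.Injective.extension_property R E _ _ (LinearMap.range g).subtype
      Subtype.val_injective ψ
    exact ⟨χ, rfl⟩
  · rintro ⟨χ, rfl⟩
    exact ⟨χ ∘ₗ (LinearMap.range g).subtype, rfl⟩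

variable (R) (K M E : Type*) [AddCommGroup K] [Module R K] [AddCommGroup M] [Module R M]
  [AddCommGroup E] [Module R E]

/-- The evaluation homomorphism `K ⊗ Hom(M, E) → Hom(Hom(K, M), E)`, sending `k ⊗ f` to
`g ↦ f (g k)`. -/
def tensorHomEval : K ⊗[R] (M →ₗ[R] E) →ₗ[R] ((K →ₗ[R] M) →ₗ[R] E) :=
  TensorProduct.lift ((LinearMap.llcomp R (K →ₗ[R] M) M E).flip ∘ₗ LinearMap.applyₗ)

variable {R K}

@[simp]
lemma tensorHomEval_tmul_apply (k : K) (f : M →ₗ[R] E) (g : K →ₗ[R] M) :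
    tensorHomEval R K M E (k ⊗ₜ f) g = f (g k) := rfl

lemma lcomp_lcomp_comp_tensorHomEval {F : Type*} [AddCommGroup F] [Module R F] (j : K →ₗ[R] F) :
    LinearMap.lcomp R E (LinearMap.lcomp R M j) ∘ₗ tensorHomEval R K M E =
      tensorHomEval R F M E ∘ₗ j.rTensor (M →ₗ[R] E) :=
  TensorProduct.ext' fun _ _ ↦ rfl

variable (R) in
lemma tensorHomEval_bijective_pi (ι : Type*) [Finite ι] :
    Function.Bijective (tensorHomEval R (ι → R) M E) := by
  classical
  cases nonempty_fintype ι
  let e : (ι → R) ⊗[R] (M →ₗ[R] E) ≃ₗ[R] (((ι → R) →ₗ[R] M) →ₗ[R] E) :=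
    TensorProduct.comm R _ _ ≪≫ₗ TensorProduct.piScalarRight R R (M →ₗ[R] E) ι ≪≫ₗ
      LinearMap.lsum R (fun _ : ι ↦ M) R ≪≫ₗ .congrLeft E R ((Pi.basisFun R ι).constr R)
  suffices tensorHomEval R (ι → R) M E = e.toLinearMap by rw [this]; exact e.bijective
  ext i f g
  simp [e, LinearEquiv.congrLeft, LinearMap.lsum_apply]

variable (R K) in
lemma tensorHomEval_bijective (E : Type u) [Small.{u} R] [AddCommGroup E] [Module R E]
    [Module.FinitePresentation R K] [Module.Injective R E] :
    Function.Bijective (tensorHomEval R K M E) := by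
  obtain ⟨n, m, f, g, hf, hgf⟩ := Module.FinitePresentation.exists_fin' R K
  exact LinearMap.bijective_of_surjective_of_bijective_of_right_exact
    (g.rTensor (M →ₗ[R] E)) (f.rTensor (M →ₗ[R] E))
    (LinearMap.lcomp R E (LinearMap.lcomp R M g)) (LinearMap.lcomp R E (LinearMap.lcomp R M f))
    (tensorHomEval R (Fin m → R) M E) (tensorHomEval R (Fin n → R) M E) (tensorHomEval R K M E)
    (lcomp_lcomp_comp_tensorHomEval M E g) (lcomp_lcomp_comp_tensorHomEval M E f)
    (rTensor_exact _ hgf hf)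
    (exact_lcomp_of_injective (LinearMap.exact_lcomp_of_exact_of_surjective M hgf hf))
    (tensorHomEval_bijective_pi R M E (Fin m)).surjective
    (tensorHomEval_bijective_pi R M E (Fin n)) (LinearMap.rTensor_surjective _ hf)
    (Module.Injective.extension_property R E _ _ _ (LinearMap.lcomp_injective_of_surjective f hf))

end TensorHomEval

section Homology

variable {R : Type u} [CommRing R] (S : ShortComplex (ModuleCat.{u} R))

lemma exists_surjective_exact_homology {Z : Type*} [AddCommGroup Z] [Module R Z]
    {ι : Z →ₗ[R] S.X₂} {f : S.X₁ →ₗ[R] Z} (hι : Function.Injective ι)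
    (hιg : Function.Exact ι S.g.hom) (hf : ι ∘ₗ f = S.f.hom) :
    ∃ π : Z →ₗ[R] S.homology, Function.Surjective π ∧ Function.Exact f π := by
  let e : Z ≃ₗ[R] LinearMap.ker S.g.hom :=
    .ofInjective ι hι ≪≫ₗ .ofEq _ _ hιg.linearMap_ker_eq.symm
  let h := S.moduleCatHomologyIso.toLinearEquiv
  refine ⟨h.symm.toLinearMap ∘ₗ (LinearMap.range S.moduleCatToCycles).mkQ ∘ₗ e.toLinearMap,
    h.symm.surjective.comp ((Submodule.mkQ_surjective _).comp e.surjective), fun z ↦ ?_⟩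
  refine h.symm.map_eq_zero_iff.trans ((Submodule.Quotient.mk_eq_zero _).trans ?_)
  refine exists_congr fun x ↦ Subtype.ext_iff.trans ?_
  rw [← hι.eq_iff, ← LinearMap.comp_apply, hf]
  rfl

lemma exists_injective_exact_homology {Q : Type*} [AddCommGroup Q] [Module R Q]
    {p : S.X₂ →ₗ[R] Q} {g : Q →ₗ[R] S.X₃} (hp : Function.Surjective p)
    (hfp : Function.Exact S.f.hom p) (hg : g ∘ₗ p = S.g.hom) :
    ∃ ι : S.homology →ₗ[R] Q, Function.Injective ι ∧ Function.Exact ι g := by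
  obtain ⟨π, hπ, hfπ⟩ := exists_surjective_exact_homology S (f := S.moduleCatToCycles)
    Subtype.val_injective (LinearMap.exact_subtype_ker_map S.g.hom) rfl
  obtain ⟨ι, hι⟩ := (LinearMap.exact_lcomp_of_exact_of_surjective Q hfπ hπ
    (p ∘ₗ (LinearMap.ker S.g.hom).subtype)).mp
    (LinearMap.ext fun x ↦ hfp.apply_apply_eq_zero x)
  replace hι (z : LinearMap.ker S.g.hom) : ι (π z) = p z := LinearMap.congr_fun hι z
  refine ⟨ι, (injective_iff_map_eq_zero ι).mpr fun y hy ↦ ?_, fun y ↦ ?_⟩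
  · obtain ⟨z, rfl⟩ := hπ y
    obtain ⟨x, hx⟩ := (hfp z).mp (hι z ▸ hy)
    exact (hfπ z).mpr ⟨x, Subtype.ext hx⟩
  · obtain ⟨x, rfl⟩ := hp y
    rw [← LinearMap.comp_apply, hg]
    constructor
    · exact fun hx ↦ ⟨π ⟨x, hx⟩, hι _⟩
    · rintro ⟨y, hy⟩
      obtain ⟨z, rfl⟩ := hπ y
      rw [← hg, LinearMap.comp_apply, ← hy, hι, ← LinearMap.comp_apply, hg]
      exact z.2

end Homology

section Resolution

open TensorProduct

variable {R : Type u} [CommRing R] {X : ModuleCat.{u} R} (P : ProjectiveResolution X)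

/-- The first syzygy of a projective resolution `⋯ → P₁ → P₀ → X`, as a submodule of `P₀`. -/
def firstSyzygy : Submodule R (P.complex.X 0) :=
  LinearMap.range (P.complex.d 1 0).hom

/-- The surjection of `P₁` onto the first syzygy induced by the differential. -/
def toFirstSyzygy : P.complex.X 1 →ₗ[R] firstSyzygy P :=
  (P.complex.d 1 0).hom.rangeRestrict

lemma toFirstSyzygy_surjective : Function.Surjective (toFirstSyzygy P) :=
  LinearMap.surjective_rangeRestrict _

lemma exact_d_toFirstSyzygy : Function.Exact (P.complex.d 2 1).hom (toFirstSyzygy P) :=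
  ((firstSyzygy P).injective_subtype.comp_exact_iff_exact (g := toFirstSyzygy P)).mp <|
    (ShortComplex.ShortExact.moduleCat_exact_iff_function_exact _).mp (P.exact_succ 0)

lemma exact_firstSyzygy_subtype_π :
    Function.Exact (firstSyzygy P).subtype (P.π.f 0).hom :=
  ((toFirstSyzygy_surjective P).comp_exact_iff_exact (f := (firstSyzygy P).subtype)).mp <|
    (ShortComplex.ShortExact.moduleCat_exact_iff_function_exact _).mp P.exact₀

lemma projectiveResolution_π_surjective : Function.Surjective (P.π.f 0).hom :=
  (ModuleCat.epi_iff_surjective _).mp inferInstance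

lemma projectiveResolution_projective (n : ℕ) : Module.Projective R (P.complex.X n) :=
  (IsProjective.iff_projective _).mpr (P.projective n)

lemma exists_injective_tor_exact_firstSyzygy (T : Type u) [AddCommGroup T] [Module R T] :
    ∃ ι : (((Tor (ModuleCat.{u} R) 1).obj (ModuleCat.of R T)).obj X) →ₗ[R] T ⊗[R] firstSyzygy P,
      Function.Injective ι ∧ Function.Exact ι ((firstSyzygy P).subtype.lTensor T) := by
  let tensorT := (MonoidalCategory.tensoringLeft _).obj (ModuleCat.of R T)
  let C := (tensorT.mapHomologicalComplex _).obj P.complex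
  let e := (P.isoLeftDerivedObj tensorT 1 ≪≫
    C.homologyIsoSc' 2 1 0 (by simp) (by simp)).toLinearEquiv
  obtain ⟨ι, hι, hexact⟩ := exists_injective_exact_homology (C.sc' 2 1 0)
    (p := (toFirstSyzygy P).lTensor T) (g := (firstSyzygy P).subtype.lTensor T)
    (LinearMap.lTensor_surjective T (toFirstSyzygy_surjective P))
    (lTensor_exact T (exact_d_toFirstSyzygy P) (toFirstSyzygy_surjective P))
    (LinearMap.lTensor_comp T _ _).symm
  exact ⟨ι ∘ₗ e.toLinearMap, hι.comp e.injective, LinearEquiv.precomp_exact_iff_exact.mpr hexact⟩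

lemma exists_surjective_ext_exact_firstSyzygy (M : Type u) [AddCommGroup M] [Module R M] :
    ∃ ρ : (firstSyzygy P →ₗ[R] M) →ₗ[R]
        (((Ext R (ModuleCat.{u} R) 1).obj (Opposite.op X)).obj (ModuleCat.of R M)),
      Function.Surjective ρ ∧ Function.Exact (LinearMap.lcomp R M (firstSyzygy P).subtype) ρ := by
  let C := P.complex.linearYonedaObj R (ModuleCat.of R M)
  let e := (P.isoExt (R := R) 1 (ModuleCat.of R M) ≪≫
    C.homologyIsoSc' 0 1 2 (by simp) (by simp)).toLinearEquiv
  let h (n : ℕ) : (P.complex.X n ⟶ ModuleCat.of R M) ≃ₗ[R] (P.complex.X n →ₗ[R] M) :=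
    ModuleCat.homLinearEquiv (S := R)
  have hexact : Function.Exact ((h 1).symm.toLinearMap ∘ₗ LinearMap.lcomp R M (toFirstSyzygy P))
      ((h 2).symm.toLinearMap ∘ₗ LinearMap.lcomp R M (P.complex.d 2 1).hom ∘ₗ
        (h 1).toLinearMap) :=
    LinearEquiv.postcomp_exact_iff_exact.mpr <|
      (LinearEquiv.conj_symm_exact_iff_exact _ _ (h 1)).mpr <|
        LinearMap.exact_lcomp_of_exact_of_surjective M (exact_d_toFirstSyzygy P)
          (toFirstSyzygy_surjective P)
  obtain ⟨ρ, hρ, hρexact⟩ := exists_surjective_exact_homology (C.sc' 0 1 2)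
    (ι := (h 1).symm.toLinearMap ∘ₗ LinearMap.lcomp R M (toFirstSyzygy P))
    (f := LinearMap.lcomp R M (firstSyzygy P).subtype ∘ₗ (h 0).toLinearMap)
    ((h 1).symm.injective.comp
      (LinearMap.lcomp_injective_of_surjective _ (toFirstSyzygy_surjective P))) hexact rfl
  exact ⟨e.symm.toLinearMap ∘ₗ ρ, e.symm.surjective.comp hρ,
    LinearEquiv.postcomp_exact_iff_exact.mpr (LinearEquiv.precomp_exact_iff_exact.mp hρexact)⟩

end Resolution

section Snake

variable {R : Type*} [CommRing R] {M₁ M₂ M₃ N₁ N₂ N₃ K₃ C₁ C₂ : Type*}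
  [AddCommGroup M₁] [Module R M₁] [AddCommGroup M₂] [Module R M₂] [AddCommGroup M₃] [Module R M₃]
  [AddCommGroup N₁] [Module R N₁] [AddCommGroup N₂] [Module R N₂] [AddCommGroup N₃] [Module R N₃]
  [AddCommGroup K₃] [Module R K₃] [AddCommGroup C₁] [Module R C₁] [AddCommGroup C₂] [Module R C₂]

lemma exists_injective_exact_of_snake {f₁ : M₁ →ₗ[R] M₂} {f₂ : M₂ →ₗ[R] M₃} {g₁ : N₁ →ₗ[R] N₂}
    {g₂ : N₂ →ₗ[R] N₃} {i₁ : M₁ →ₗ[R] N₁} {i₂ : M₂ →ₗ[R] N₂} {i₃ : M₃ →ₗ[R] N₃}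
    {ι₃ : K₃ →ₗ[R] M₃} {π₁ : N₁ →ₗ[R] C₁} {π₂ : N₂ →ₗ[R] C₂} {c : C₁ →ₗ[R] C₂}
    (hf : Function.Exact f₁ f₂) (hf₂ : Function.Surjective f₂)
    (hg : Function.Exact g₁ g₂) (hg₁ : Function.Injective g₁)
    (h₁ : g₁ ∘ₗ i₁ = i₂ ∘ₗ f₁) (h₂ : g₂ ∘ₗ i₂ = i₃ ∘ₗ f₂) (hc : c ∘ₗ π₁ = π₂ ∘ₗ g₁)
    (hi₂ : Function.Injective i₂) (hι₃ : Function.Injective ι₃) (hιi₃ : Function.Exact ι₃ i₃)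
    (hiπ₁ : Function.Exact i₁ π₁) (hπ₁ : Function.Surjective π₁) (hiπ₂ : Function.Exact i₂ π₂) :
    ∃ δ : K₃ →ₗ[R] C₁, Function.Injective δ ∧ Function.Exact δ c := by
  refine ⟨SnakeLemma.δ' i₁ i₂ i₃ f₁ f₂ hf g₁ g₂ hg h₁ h₂ ι₃ hιi₃ π₁ hiπ₁ hf₂ hg₁, ?_,
    SnakeLemma.exact_δ'_left _ _ _ _ _ hf _ _ hg h₁ h₂ _ hιi₃ _ hiπ₁ π₂ hiπ₂ hf₂ hg₁ c hc hπ₁⟩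
  have zero_exact : Function.Exact (0 : PUnit →ₗ[R] M₂) i₂ :=
    (LinearMap.exact_zero_iff_injective _ _).mpr hi₂
  exact (LinearMap.exact_zero_iff_injective PUnit _).mp <|
    SnakeLemma.exact_δ'_right _ _ _ _ _ hf _ _ hg h₁ h₂ _ zero_exact _ hιi₃ _ hiπ₁ hf₂ hg₁
      0 (by simp) hι₃

end Snake

section Schanuel

variable {R : Type*} [CommRing R] {K F L P T M : Type*}
  [AddCommGroup K] [Module R K] [AddCommGroup F] [Module R F] [AddCommGroup L] [Module R L]
  [AddCommGroup P] [Module R P] [AddCommGroup T] [Module R T] [AddCommGroup M] [Module R M]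
  {j : K →ₗ[R] F} {p : F →ₗ[R] T} {i : L →ₗ[R] P} {q : P →ₗ[R] T} {α : P →ₗ[R] F} {a : L →ₗ[R] K}

lemma exists_comp_eq_of_exact (hj : Function.Injective j) (hjp : Function.Exact j p)
    {u : L →ₗ[R] F} (hu : p ∘ₗ u = 0) : ∃ a : L →ₗ[R] K, j ∘ₗ a = u := by
  let e := LinearEquiv.ofInjective j hj
  have mem_range (x : L) : u x ∈ LinearMap.range j := (hjp _).mp (LinearMap.congr_fun hu x)
  exact ⟨e.symm.toLinearMap ∘ₗ u.codRestrict _ mem_range, LinearMap.ext fun x ↦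
    congrArg Subtype.val (e.apply_symm_apply ⟨u x, mem_range x⟩)⟩

lemma exact_prod_coprod_neg (hj : Function.Injective j) (hjp : Function.Exact j p)
    (hiq : Function.Exact i q) (hα : p ∘ₗ α = q) (ha : j ∘ₗ a = α ∘ₗ i) :
    Function.Exact (a.prod i) (j.coprod (-α)) := by
  replace hα (x : P) : p (α x) = q x := LinearMap.congr_fun hα x
  replace ha (l : L) : j (a l) = α (i l) := LinearMap.congr_fun ha l
  rintro ⟨k, x⟩
  constructor
  · intro h
    have hk : j k = α x := by simpa [add_neg_eq_zero] using h
    obtain ⟨l, rfl⟩ := (hiq x).mp (by rw [← hα, ← hk, hjp.apply_apply_eq_zero])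
    exact ⟨l, Prod.ext (hj ((ha l).trans hk.symm)) rfl⟩
  · rintro ⟨l, hl⟩
    obtain ⟨rfl, rfl⟩ := Prod.ext_iff.mp hl
    simp [ha]

lemma coprod_neg_surjective (hjp : Function.Exact j p) (hq : Function.Surjective q)
    (hα : p ∘ₗ α = q) : Function.Surjective (j.coprod (-α)) := fun y ↦ by
  obtain ⟨x, hx⟩ := hq (p y)
  obtain ⟨k, hk⟩ := (hjp (y - α x)).mp (by
    rw [map_sub, ← LinearMap.comp_apply, hα, hx, sub_self])
  exact ⟨(k, -x), by simp [hk]⟩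

lemma exists_comp_add_comp_eq [Module.Projective R F] {b : K × P →ₗ[R] F}
    (hinj : Function.Injective (a.prod i)) (hexact : Function.Exact (a.prod i) b)
    (hb : Function.Surjective b) (g : L →ₗ[R] M) :
    ∃ (f : K →ₗ[R] M) (k : P →ₗ[R] M), f ∘ₗ a + k ∘ₗ i = g := by
  obtain ⟨r, hr⟩ := ((hexact.split_tfae hinj hb).out 0 1).mp
    (Module.projective_lifting_property _ LinearMap.id hb)
  refine ⟨g ∘ₗ r ∘ₗ .inl R K P, g ∘ₗ r ∘ₗ .inr R K P, LinearMap.ext fun l ↦ ?_⟩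
  simpa [← map_add] using congrArg g (LinearMap.congr_fun hr l)

-- Schanuel's argument: `0 → L → K × P → F → 0` is exact and splits, so `Hom(-, M)` turns the
-- square formed by `a`, `α`, `i`, `j` into one inducing an isomorphism on the cokernels of
-- `- ∘ j` and `- ∘ i`.
lemma exists_surjective_exact_lcomp_of_projective [Module.Projective R F] [Module.Projective R P]
    {X : Type*} [AddCommGroup X] [Module R X]
    (hj : Function.Injective j) (hjp : Function.Exact j p) (hp : Function.Surjective p)
    (hi : Function.Injective i) (hiq : Function.Exact i q) (hq : Function.Surjective q)
    {ρ : (L →ₗ[R] M) →ₗ[R] X} (hρ : Function.Surjective ρ)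
    (hiρ : Function.Exact (LinearMap.lcomp R M i) ρ) :
    ∃ σ : (K →ₗ[R] M) →ₗ[R] X,
      Function.Surjective σ ∧ Function.Exact (LinearMap.lcomp R M j) σ := by
  obtain ⟨α, hα⟩ := Module.projective_lifting_property p q hp
  obtain ⟨a, ha⟩ := exists_comp_eq_of_exact hj hjp (u := α ∘ₗ i) <| by
    rw [← LinearMap.comp_assoc, hα, hiq.linearMap_comp_eq_zero]
  have hexact := exact_prod_coprod_neg hj hjp hiq hα ha
  have hsurj := coprod_neg_surjective hjp hq hα
  have hinj : Function.Injective (a.prod i) := fun l l' h ↦ hi (congrArg Prod.snd h)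
  refine ⟨ρ ∘ₗ LinearMap.lcomp R M a, fun y ↦ ?_, fun f ↦ ?_⟩
  · obtain ⟨g, rfl⟩ := hρ y
    obtain ⟨f, k, rfl⟩ := exists_comp_add_comp_eq hinj hexact hsurj g
    refine ⟨f, ?_⟩
    rw [map_add]
    exact (add_eq_left.mpr (hiρ.apply_apply_eq_zero k)).symm
  · refine (hiρ _).trans ⟨?_, ?_⟩
    · rintro ⟨k, hk⟩
      obtain ⟨g, hg⟩ := (LinearMap.exact_lcomp_of_exact_of_surjective M hexact hsurj
        (f.coprod (-k))).mp (by
          ext l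
          simpa [add_neg_eq_zero] using (LinearMap.congr_fun hk l).symm)
      exact ⟨g, LinearMap.ext fun x ↦ by simpa using LinearMap.congr_fun hg (x, 0)⟩
    · rintro ⟨g, rfl⟩
      exact ⟨g ∘ₗ α, congrArg (g ∘ₗ ·) ha.symm⟩

end Schanuel

lemma nonempty_linearEquiv_of_injective_of_exact {R A B C D : Type*} [CommRing R]
    [AddCommGroup A] [Module R A] [AddCommGroup B] [Module R B] [AddCommGroup C] [Module R C]
    [AddCommGroup D] [Module R D] {f : A →ₗ[R] C} {f' : B →ₗ[R] C} {g : C →ₗ[R] D}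
    (hf : Function.Injective f) (hfg : Function.Exact f g)
    (hf' : Function.Injective f') (hfg' : Function.Exact f' g) : Nonempty (A ≃ₗ[R] B) :=
  ⟨.ofInjective f hf ≪≫ₗ .ofEq _ _ (hfg.linearMap_ker_eq.symm.trans hfg'.linearMap_ker_eq) ≪≫ₗ
    (LinearEquiv.ofInjective f' hf').symm⟩

section Presentation

open TensorProduct

variable {R : Type u} [CommRing R] {K F T : Type u} [AddCommGroup K] [Module R K]
  [AddCommGroup F] [Module R F] [AddCommGroup T] [Module R T] {j : K →ₗ[R] F} {p : F →ₗ[R] T}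

lemma exists_injective_tor_exact_rTensor (Y : Type u) [AddCommGroup Y] [Module R Y]
    [Module.Flat R F] (hj : Function.Injective j) (hjp : Function.Exact j p)
    (hp : Function.Surjective p) :
    ∃ ι : (((Tor (ModuleCat.{u} R) 1).obj (ModuleCat.of R T)).obj (ModuleCat.of R Y)) →ₗ[R]
        K ⊗[R] Y,
      Function.Injective ι ∧ Function.Exact ι (j.rTensor Y) := by
  let P := projectiveResolution (ModuleCat.of R Y)
  have : Module.Projective R (P.complex.X 0) := projectiveResolution_projective P 0
  let i := (firstSyzygy P).subtype
  let q : P.complex.X 0 →ₗ[R] Y := (P.π.f 0).hom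
  have hiq : Function.Exact i q := exact_firstSyzygy_subtype_π P
  have hq : Function.Surjective q := projectiveResolution_π_surjective P
  obtain ⟨ι, hι, hιi⟩ := exists_injective_tor_exact_firstSyzygy P T
  exact exists_injective_exact_of_snake (i₁ := i.lTensor K) (i₂ := i.lTensor F)
    (π₁ := q.lTensor K) (π₂ := q.lTensor F)
    (rTensor_exact (firstSyzygy P) hjp hp) (LinearMap.rTensor_surjective _ hp)
    (rTensor_exact (P.complex.X 0) hjp hp)
    (Module.Flat.rTensor_preserves_injective_linearMap j hj)
    (by ext; rfl) (by ext; rfl) (by ext; rfl)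
    (Module.Flat.lTensor_preserves_injective_linearMap i (firstSyzygy P).injective_subtype)
    hι hιi (lTensor_exact K hiq hq) (LinearMap.lTensor_surjective K hq) (lTensor_exact F hiq hq)

lemma exists_surjective_ext_exact_lcomp (M : Type u) [AddCommGroup M] [Module R M]
    [Module.Projective R F] (hj : Function.Injective j) (hjp : Function.Exact j p)
    (hp : Function.Surjective p) :
    ∃ ρ : (K →ₗ[R] M) →ₗ[R] (((Ext R (ModuleCat.{u} R) 1).obj
        (Opposite.op (ModuleCat.of R T))).obj (ModuleCat.of R M)),
      Function.Surjective ρ ∧ Function.Exact (LinearMap.lcomp R M j) ρ := by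
  let P := projectiveResolution (ModuleCat.of R T)
  have : Module.Projective R (P.complex.X 0) := projectiveResolution_projective P 0
  obtain ⟨ρ, hρ, hiρ⟩ := exists_surjective_ext_exact_firstSyzygy P M
  exact exists_surjective_exact_lcomp_of_projective hj hjp hp (firstSyzygy P).injective_subtype
    (exact_firstSyzygy_subtype_π P) (projectiveResolution_π_surjective P) hρ hiρ

theorem nonempty_tor_linearEquiv_dual_ext (M E : Type u) [AddCommGroup M] [Module R M]
    [AddCommGroup E] [Module R E] [Module.Injective R E] [Module.FinitePresentation R K]
    [Module.Finite R F] [Module.Projective R F]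
    (hj : Function.Injective j) (hjp : Function.Exact j p) (hp : Function.Surjective p) :
    Nonempty
      ((((Tor (ModuleCat.{u} R) 1).obj (ModuleCat.of R T)).obj
          (ModuleCat.of R (M →ₗ[R] E))) ≃ₗ[R]
        ((((Ext R (ModuleCat.{u} R) 1).obj (Opposite.op (ModuleCat.of R T))).obj
            (ModuleCat.of R M)) →ₗ[R] E)) := by
  have : Module.FinitePresentation R F := Module.finitePresentation_of_projective R F
  obtain ⟨ι, hι, hιj⟩ := exists_injective_tor_exact_rTensor (M →ₗ[R] E) hj hjp hp
  obtain ⟨ρ, hρ, hjρ⟩ := exists_surjective_ext_exact_lcomp M hj hjp hp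
  have hK := tensorHomEval_bijective R K M E
  have hF := tensorHomEval_bijective R F M E
  have tor_exact : Function.Exact (tensorHomEval R K M E ∘ₗ ι)
      (LinearMap.lcomp R E (LinearMap.lcomp R M j)) :=
    (LinearMap.exact_iff_of_surjective_of_bijective_of_injective ι (j.rTensor (M →ₗ[R] E)) _ _
      LinearMap.id _ _ rfl (lcomp_lcomp_comp_tensorHomEval M E j) Function.surjective_id
      hK hF.injective).mp hιj
  exact nonempty_linearEquiv_of_injective_of_exact (hK.injective.comp hι) tor_exact
    (LinearMap.lcomp_injective_of_surjective ρ hρ)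
    (LinearMap.exact_lcomp_of_exact_of_surjective E hjρ hρ)

end Presentation

theorem tor_hom_iso_hom_ext_general (R : Type u) [CommRing R] (hcoh : IsNonnilCoherent R)
    (M : Type u) [AddCommGroup M] [Module R M]
    (T : Type u) [AddCommGroup T] [Module R T]
    (hT : Module.FinitePresentation R T) (htor : IsPhiTorsion R T)
    (E : Type u) [AddCommGroup E] [Module R E] (hE : Module.Injective R E) :
    Nonempty
      ((((Tor (ModuleCat.{u} R) 1).obj (ModuleCat.of R T)).obj
          (ModuleCat.of R (M →ₗ[R] E))) ≃ₗ[R]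
        ((((Ext R (ModuleCat.{u} R) 1).obj (Opposite.op (ModuleCat.of R T))).obj
            (ModuleCat.of R M)) →ₗ[R] E)) := by
  obtain ⟨n, K, p, hK, hKp, hp⟩ := hcoh.exists_finitePresentation_kernel htor
  exact nonempty_tor_linearEquiv_dual_ext M E K.injective_subtype hKp hp

/-- Let `R` be a nonnil-coherent φ-ring, `M` a module, `T` a finitely
presented φ-torsion module and `E` an injective module. Then
`Tor₁ᴿ(T, Hom_R(M,E)) ≅ Hom_R(Ext¹ᴿ(T,M), E)` as abelian groups. -/
theorem tor_hom_iso_hom_ext (R : Type u) [CommRing R] (hR : IsPhiRing R)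
    (hcoh : IsNonnilCoherent R)
    (M : Type u) [AddCommGroup M] [Module R M]
    (T : Type u) [AddCommGroup T] [Module R T]
    (hT : Module.FinitePresentation R T) (htor : IsPhiTorsion R T)
    (E : Type u) [AddCommGroup E] [Module R E] (hE : Module.Injective R E) :
    Nonempty
      ((((Tor (ModuleCat.{u} R) 1).obj (ModuleCat.of R T)).obj
          (ModuleCat.of R (M →ₗ[R] E))) ≃+
        ((((Ext R (ModuleCat.{u} R) 1).obj (Opposite.op (ModuleCat.of R T))).obj
            (ModuleCat.of R M)) →ₗ[R] E)) :=
  (tor_hom_iso_hom_ext_general R hcoh M T hT htor E hE).map LinearEquiv.toAddEquiv
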